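/- arXiv:2310.04814 — 2 statements merged into one kernel-verified Lean document; each statement's English description precedes it below -/
import Mathlib

section
/- Let U be a consistent c.e. theory and 𝒳 a set of sentences. The following are equivalent: (a) U is effectively 𝒳-inseparable; (b) U is effectively essentially 𝒳-creative; (c) U is effectively essentially 𝒳-incomplete; (d) U is effectively if-essentially 𝒳-incomplete. -/
/-!
Inseparability yields a sentence outside a pair of sets as soon as the pair separates `U_p` and
`U_r`; for a consistent extension `T` of `U`, the sets `T_p` and `W ∪ T_r` do so whenever `W` misses
`T_p`, which gives creativity, and taking `W = T_r` turns creativity into incompleteness. To get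
back from finite extensions to inseparability, let `Z`, `W` weakly biseparate `U_p` and `U_r`. The
recursion theorem provides an index `k` of the theory consisting of `U` together with the sentence
`φ` coded by `Φ k` if `φ` shows up in `Z` first, or with `∼φ` if it shows up in `W` first. If `φ`
were in `Z ∪ W`, this theory would be a consistent finite extension of `U` deciding `φ`, against the
choice of `Φ`. Hence the theory is just `U`, which is consistent, so `Φ k` converges to a sentence
of `𝒳`, and this sentence is outside `Z ∪ W`.
-/

open FirstOrder FirstOrder.Language

namespace PourEl

/-! ## Recursion-theoretic notions -/

/-- The `i`-th computably enumerable subset of `ℕ` (the domain of the `i`-th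
partial computable function). -/
def WSet (i : ℕ) : Set ℕ :=
  {n | ((Denumerable.ofNat Nat.Partrec.Code i).eval n).Dom}

/-- A set of natural numbers is computably enumerable. -/
def CE (A : Set ℕ) : Prop := ∃ i, A = WSet i

/-- A set of natural numbers is computable. -/
def Comp (A : Set ℕ) : Prop := ComputablePred (· ∈ A)

/-- Disjoint sets `X`, `Y` are computably separable iff some computable set
contains `X` and is disjoint from `Y`. -/
def CompSeparable (X Y : Set ℕ) : Prop :=
  ∃ Z : Set ℕ, Comp Z ∧ X ⊆ Z ∧ Y ∩ Z = ∅

/-- Computable inseparability. -/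
def CompInseparable (X Y : Set ℕ) : Prop := ¬ CompSeparable X Y

/-- `Z` and `W` weakly biseparate `X` and `Y`. -/
def WeaklyBiseparate {α : Type*} (Z W X Y : Set α) : Prop :=
  X ⊆ Z ∧ Y ⊆ W ∧ Z ∩ Y = ∅ ∧ W ∩ X = ∅

/-- `Z` and `W` biseparate `X` and `Y`. -/
def Biseparate {α : Type*} (Z W X Y : Set α) : Prop :=
  WeaklyBiseparate Z W X Y ∧ Z ∩ W = ∅

/-! ## Logical notions -/

variable {L : FirstOrder.Language}

/-- Provability: `φ` is a first-order consequence of `U` (by Gödel completeness,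
semantic consequence). -/
def Prv (U : L.Theory) (φ : L.Sentence) : Prop := U ⊨ᵇ φ

/-- `U_p`: the set of theorems of `U`. -/
def Thms (U : L.Theory) : Set L.Sentence := {φ | Prv U φ}

/-- `U_r`: the set of refutable sentences of `U`. -/
def Refut (U : L.Theory) : Set L.Sentence := {φ | Prv U ∼φ}

/-- Consistency: `U ⊬ ⊥`. -/
def Consistent (U : L.Theory) : Prop := ¬ Prv U ⊥

/-- `φ` is independent of `U`: `U` proves neither `φ` nor `¬φ`. -/
def Independent (U : L.Theory) (φ : L.Sentence) : Prop := ¬ Prv U φ ∧ ¬ Prv U ∼φ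

/-- `U` is incomplete: some sentence is independent of it. -/
def Incomplete (U : L.Theory) : Prop := ∃ φ, Independent U φ

/-- Mono-consequence: `U ⊢_m φ` iff `ψ ⊢ φ` for some `ψ ∈ U`. -/
def MPrv (U : L.Theory) (φ : L.Sentence) : Prop := ∃ ψ ∈ U, Prv {ψ} φ

/-- `U_m`: the set of mono-theorems of `U`. -/
def MThms (U : L.Theory) : Set L.Sentence := {φ | MPrv U φ}

/-- `U_n`: the set of mono-refutable sentences of `U`. -/
def MRefut (U : L.Theory) : Set L.Sentence := {φ | MPrv U ∼φ}

/-- Mono-consistency: every member is consistent by itself. -/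
def MonoConsistent (U : L.Theory) : Prop := ∀ ψ ∈ U, Consistent ({ψ} : L.Theory)

/-- `Û`: the set of all non-empty finite conjunctions of elements of `U`. -/
def hat (U : L.Theory) : L.Theory :=
  {φ | ∃ (ψ : L.Sentence) (l : List L.Sentence),
    ψ ∈ U ∧ (∀ χ ∈ l, χ ∈ U) ∧ φ = l.foldl (· ⊓ ·) ψ}

/-- `U ⋓ V`. -/
def Cup (U V : L.Theory) : L.Theory :=
  {χ | ∃ φ ∈ U, ∃ ψ ∈ V, χ = φ ⊓ ψ}

/-- `U ⋐ V`: for every `φ ∈ U` and `ψ ∈ V` there is `ρ ∈ V` with `ρ ⊢ φ ∧ ψ`. -/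
def Ssub (U V : L.Theory) : Prop :=
  ∀ φ ∈ U, ∀ ψ ∈ V, ∃ ρ ∈ V, Prv {ρ} (φ ⊓ ψ)

/-! ## Gödel numbering -/

/-- A Gödel numbering of the sentences of a (countable) signature: a bijective
coding of sentences by natural numbers that is effective for the basic syntactic
operations, and for which the theorems of a c.e. theory can be effectively
enumerated from an index of the theory. -/
structure Numbering (L : FirstOrder.Language) where
  equiv : L.Sentence ≃ ℕ
  neg_comp : Computable fun n => equiv ∼(equiv.symm n)
  inf_comp : Computable₂ fun m n => equiv (equiv.symm m ⊓ equiv.symm n)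
  imp_comp : Computable₂ fun m n => equiv (equiv.symm m ⟹ equiv.symm n)
  iff_comp : Computable₂ fun m n => equiv (equiv.symm m ⇔ equiv.symm n)
  thmIdx : ℕ → ℕ
  thmIdx_comp : Computable thmIdx
  thmIdx_spec : ∀ i, WSet (thmIdx i) = equiv '' Thms (equiv.symm '' WSet i)

namespace Numbering

variable (g : Numbering L)

/-- The code of a sentence. -/
def code (φ : L.Sentence) : ℕ := g.equiv φ

/-- The set of codes of a set of sentences. -/
def codes (S : Set L.Sentence) : Set ℕ := g.equiv '' S

/-- The theory axiomatised by the `i`-th c.e. set (identified with a set of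
sentences via the numbering). -/
def thy (i : ℕ) : L.Theory := g.equiv.symm '' WSet i

/-- The theory `U` is computably enumerable (with respect to the numbering). -/
def CEThy (U : L.Theory) : Prop := CE (g.codes U)

end Numbering



/-- `U` is effectively `X`-inseparable: a partial computable function uniformly
produces, from any pair of c.e. sets weakly biseparating `U_p` and `U_r`, a
sentence in `X` lying outside both. -/
def EffXInseparable (g : Numbering L) (U : L.Theory) (X : Set L.Sentence) : Prop :=
  ∃ Φ : ℕ → ℕ →. ℕ, Partrec₂ Φ ∧ ∀ i j,
    WeaklyBiseparate (WSet i) (WSet j) (g.codes (Thms U)) (g.codes (Refut U)) →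
    ∃ n ∈ Φ i j, n ∈ g.codes X ∧ n ∉ WSet i ∪ WSet j

/-- `U` is effectively essentially `X`-incomplete: from an index of any consistent
c.e. extension of `U` one can partial-computably find a sentence in `X`
independent of that extension. -/
def EffEssXIncomplete (g : Numbering L) (U : L.Theory) (X : Set L.Sentence) : Prop :=
  ∃ Φ : ℕ →. ℕ, Partrec Φ ∧ ∀ i,
    Thms U ⊆ Thms (g.thy i) → Consistent (g.thy i) →
    ∃ n ∈ Φ i, ∃ φ : L.Sentence, g.code φ = n ∧ φ ∈ X ∧ Independent (g.thy i) φ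

/-- `Φ` witnesses that `U` is effectively if-essentially `F`-incomplete: whenever
`W i` is a consistent finite extension of `U` (as a set of axioms), `Φ i`
converges to (the code of) a sentence in `F (W i)` independent of `W i`. -/
def IfEssWitness (g : Numbering L) (U : L.Theory)
    (F : Set L.Sentence → Set L.Sentence) (Φ : ℕ →. ℕ) : Prop :=
  ∀ i, (∃ Γ : Finset L.Sentence, g.thy i = U ∪ (Γ : Set L.Sentence)) →
    Consistent (g.thy i) →
    ∃ n ∈ Φ i, ∃ φ : L.Sentence, g.code φ = n ∧ φ ∈ F (g.thy i) ∧ Independent (g.thy i) φ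

/-- `U` is effectively if-essentially `F`-incomplete. -/
def EffIfEssIncomplete (g : Numbering L) (U : L.Theory)
    (F : Set L.Sentence → Set L.Sentence) : Prop :=
  ∃ Φ : ℕ →. ℕ, Partrec Φ ∧ IfEssWitness g U F Φ

/-- `U` is effectively essentially `X`-creative. -/
def EffEssXCreative (g : Numbering L) (U : L.Theory) (X : Set L.Sentence) : Prop :=
  ∃ Φ : ℕ → ℕ →. ℕ, Partrec₂ Φ ∧ ∀ i j,
    Thms U ⊆ Thms (g.thy i) → Consistent (g.thy i) →
    g.codes (Thms (g.thy i)) ∩ WSet j = ∅ →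
    ∃ n ∈ Φ i j, n ∈ g.codes X ∧ n ∉ g.codes (Thms (g.thy i)) ∪ WSet j

section RecursivelyEnumerable

variable {α β σ : Type*} [Primcodable α] [Primcodable β] [Primcodable σ]

theorem partrec_assert_some {p : α → Prop} (hp : REPred p) (b : σ) :
    Partrec fun a => Part.assert (p a) fun _ => Part.some b :=
  (Partrec.map hp (Computable.const b).to₂).of_eq fun a => by
    ext; simp [Part.mem_assert_iff, eq_comm]

theorem rePred_comp {p : β → Prop} (hp : REPred p) {f : α → β} (hf : Computable f) :
    REPred fun a => p (f a) :=
  Partrec.comp hp hf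

theorem rePred_exists_mem {f : α →. β} (hf : Partrec f) {p : α × β → Prop} (hp : REPred p) :
    REPred fun a => ∃ b ∈ f a, p (a, b) := by
  refine (Partrec.bind hf (Partrec.to₂ hp)).dom_re.of_eq fun a => ?_
  simp [Part.dom_iff_mem, Part.mem_bind_iff, Part.mem_assert_iff]

theorem rePred_eq {f g : α → β} (hf : Computable f) (hg : Computable g) :
    REPred fun a => f a = g a :=
  rePred_comp Primrec.eq.computablePred.to_re (hf.pair hg)

/-- `f` is a selector for the pair `Z`, `W`: it converges exactly on `Z ∪ W`, with value `true` only
on `Z` and `false` only on `W`. On `Z ∩ W` either value is allowed. -/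
structure IsSelector {γ : Type*} (f : γ →. Bool) (Z W : Set γ) : Prop where
  mem_left : ∀ {a}, true ∈ f a → a ∈ Z
  mem_right : ∀ {a}, false ∈ f a → a ∈ W
  dom_iff : ∀ {a}, (f a).Dom ↔ a ∈ Z ∪ W

theorem IsSelector.comp {γ δ : Type*} {f : γ →. Bool} {Z W : Set γ} (hf : IsSelector f Z W)
    (e : δ → γ) : IsSelector (fun d => f (e d)) (e ⁻¹' Z) (e ⁻¹' W) where
  mem_left := hf.mem_left
  mem_right := hf.mem_right
  dom_iff := hf.dom_iff

theorem exists_partrec_isSelector {p q : α → Prop} (hp : REPred p) (hq : REPred q) :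
    ∃ f : α →. Bool, Partrec f ∧ IsSelector f {a | p a} {a | q a} := by
  obtain ⟨f, hf, hmerge⟩ :=
    Partrec.merge' (partrec_assert_some hp true) (partrec_assert_some hq false)
  refine ⟨f, hf, fun {a} h => ?_, fun {a} h => ?_, fun {a} => ?_⟩
  · simpa [Part.mem_assert_iff] using (hmerge a).1 _ h
  · simpa [Part.mem_assert_iff] using (hmerge a).1 _ h
  · simpa [Part.assert] using (hmerge a).2

theorem rePred_or {p q : α → Prop} (hp : REPred p) (hq : REPred q) :
    REPred fun a => p a ∨ q a := by
  obtain ⟨f, hf, hsel⟩ := exists_partrec_isSelector hp hq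
  exact hf.dom_re.of_eq fun _ => hsel.dom_iff

end RecursivelyEnumerable

section Indices

variable {α : Type*} [Primcodable α]

theorem rePred_mem_wSet : REPred fun q : ℕ × ℕ => q.2 ∈ WSet q.1 :=
  (Nat.Partrec.Code.eval_part.comp ((Computable.ofNat Nat.Partrec.Code).comp Computable.fst)
    Computable.snd).dom_re

theorem rePred_mem_wSet_comp {f g : α → ℕ} (hf : Computable f) (hg : Computable g) :
    REPred fun a => g a ∈ WSet (f a) :=
  rePred_comp rePred_mem_wSet (hf.pair hg)

theorem exists_computable_wSet_eq_fixedPoint {P : ℕ × α × ℕ → Prop} (hP : REPred P) :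
    ∃ s : α → ℕ, Computable s ∧ ∀ a, WSet (s a) = {x | P (s a, a, x)} := by
  let index (c : Nat.Partrec.Code) (m : ℕ) : ℕ := Encodable.encode (c.curry m)
  have index_comp : Computable₂ index :=
    Computable.encode.comp Nat.Partrec.Code.primrec₂_curry.to_comp
  have unpair_comp : Computable fun q : Nat.Partrec.Code × ℕ => q.2.unpair :=
    Computable.unpair.comp Computable.snd
  have param_comp := Computable.fst.comp unpair_comp
  have arg_comp := Computable.snd.comp unpair_comp
  have body_re : REPred fun q : Nat.Partrec.Code × ℕ =>
      ∃ a ∈ ((Encodable.decode q.2.unpair.1 : Option α) : Part α),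
        P (index q.1 q.2.unpair.1, a, q.2.unpair.2) :=
    rePred_exists_mem (Computable.decode.comp param_comp).ofOption
      (rePred_comp (f := fun q : (Nat.Partrec.Code × ℕ) × α =>
          (index q.1.1 q.1.2.unpair.1, q.2, q.1.2.unpair.2)) hP
        (((index_comp.comp Computable.fst param_comp).comp Computable.fst).pair
          (Computable.snd.pair (arg_comp.comp Computable.fst))))
  obtain ⟨c, hc⟩ := Nat.Partrec.Code.fixed_point₂ (partrec_assert_some body_re 0).to₂
  refine ⟨fun a => index c (Encodable.encode a),
    index_comp.comp (Computable.const c) Computable.encode, fun a => ?_⟩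
  ext x
  simp [WSet, index, Nat.Partrec.Code.eval_curry, hc, Part.assert]

theorem exists_computable_wSet_eq {P : α × ℕ → Prop} (hP : REPred P) :
    ∃ s : α → ℕ, Computable s ∧ ∀ a, WSet (s a) = {x | P (a, x)} :=
  exists_computable_wSet_eq_fixedPoint (rePred_comp hP Computable.snd)

theorem exists_computable_wSet_union :
    ∃ s : ℕ → ℕ → ℕ, Computable₂ s ∧ ∀ i j, WSet (s i j) = WSet i ∪ WSet j := by
  obtain ⟨s, hs, hWs⟩ := exists_computable_wSet_eq (α := ℕ × ℕ) <|
    rePred_or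
      (rePred_mem_wSet_comp (Computable.fst.comp Computable.fst) Computable.snd)
      (rePred_mem_wSet_comp (Computable.snd.comp Computable.fst) Computable.snd)
  exact ⟨fun i j => s (i, j), hs, fun i j => hWs (i, j)⟩

theorem exists_partrec_isSelector_wSet : ∃ f : (ℕ × ℕ) × ℕ →. Bool, Partrec f ∧
    ∀ i j, IsSelector (fun n => f ((i, j), n)) (WSet i) (WSet j) := by
  obtain ⟨f, hf, hsel⟩ := exists_partrec_isSelector
    (rePred_mem_wSet_comp (Computable.fst.comp Computable.fst) Computable.snd)
    (rePred_mem_wSet_comp (Computable.snd.comp Computable.fst) Computable.snd)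
  exact ⟨f, hf, fun i j => hsel.comp fun n => ((i, j), n)⟩

end Indices

section Provability

variable {S T U : L.Theory} {φ ψ : L.Sentence}

theorem prv_of_mem (h : φ ∈ T) : Prv T φ :=
  Theory.models_sentence_of_mem h

theorem thms_mono (h : S ⊆ T) : Thms S ⊆ Thms T := fun _ =>
  Theory.models_of_models_theory fun _ hψ => prv_of_mem (h hψ)

theorem refut_subset_refut (h : Thms U ⊆ Thms T) : Refut U ⊆ Refut T := fun _ hφ => h hφ

theorem prv_bot_of_prv_of_prv_not (h : Prv T φ) (hnot : Prv T ∼φ) : Prv T ⊥ :=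
  fun M v xs => BoundedFormula.realize_not.1 (hnot M v xs) (h M v xs)

theorem thms_inter_refut_eq_empty (hT : Consistent T) : Thms T ∩ Refut T = ∅ :=
  Set.eq_empty_of_forall_notMem fun _ h => hT (prv_bot_of_prv_of_prv_not h.1 h.2)

theorem prv_imp_of_prv_union_singleton (h : Prv (T ∪ {φ}) ψ) : Prv T (φ ⟹ ψ) := by
  refine Theory.models_sentence_iff.2 fun M => (Sentence.realize_imp M).2 fun hφ => ?_
  have : M ⊨ T ∪ {φ} := Theory.Model.union M.is_model (Theory.model_singleton_iff.2 hφ)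
  exact Theory.ModelsBoundedFormula.realize_sentence h M

theorem consistent_union_singleton (h : ¬ Prv T ∼φ) : Consistent (T ∪ {φ}) :=
  fun hbot => h (prv_imp_of_prv_union_singleton hbot)

theorem prv_of_prv_not_not (h : Prv T ∼(∼φ)) : Prv T φ := fun M v xs => by
  simpa only [BoundedFormula.realize_not, not_not] using h M v xs

/-- The literal on `φ` of sign `b`: `φ` itself for `true`, its negation for `false`. -/
def literal (φ : L.Sentence) (b : Bool) : L.Sentence := bif b then φ else ∼φ

theorem consistent_union_literal {b : Bool} (h : ¬ Prv T (literal φ !b)) :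
    Consistent (T ∪ {literal φ b}) := by
  cases b with
  | true => exact consistent_union_singleton h
  | false => exact consistent_union_singleton fun hnot => h (prv_of_prv_not_not hnot)

theorem not_independent_of_prv_literal {b : Bool} (h : Prv T (literal φ b)) :
    ¬ Independent T φ := by
  cases b with
  | true => exact fun hind => hind.1 h
  | false => exact fun hind => hind.2 h

end Provability

namespace Numbering

variable (g : Numbering L) {S T U : L.Theory} {Z W : Set ℕ} {n : ℕ}

theorem mem_codes_iff : n ∈ g.codes S ↔ g.equiv.symm n ∈ S :=
  Set.mem_image_equiv

theorem codes_mono (h : S ⊆ T) : g.codes S ⊆ g.codes T :=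
  Set.image_mono h

theorem codes_inter : g.codes (S ∩ T) = g.codes S ∩ g.codes T :=
  Set.image_inter g.equiv.injective

theorem wSet_thmIdx (i : ℕ) : WSet (g.thmIdx i) = g.codes (Thms (g.thy i)) :=
  g.thmIdx_spec i

theorem exists_thy_eq (hU : g.CEThy U) : ∃ u, g.thy u = U := by
  obtain ⟨u, hu⟩ := hU
  exact ⟨u, by rw [thy, ← hu, codes, Equiv.symm_image_image]⟩

theorem exists_computable_wSet_eq_codes_refut :
    ∃ r : ℕ → ℕ, Computable r ∧ ∀ i, WSet (r i) = g.codes (Refut (g.thy i)) := by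
  obtain ⟨r, hr, hWr⟩ := exists_computable_wSet_eq <|
    rePred_mem_wSet_comp (g.thmIdx_comp.comp Computable.fst) (g.neg_comp.comp Computable.snd)
  refine ⟨r, hr, fun i => ?_⟩
  ext n
  rw [hWr, Set.mem_ofPred_eq, g.wSet_thmIdx, mem_codes_iff, mem_codes_iff,
    Equiv.symm_apply_apply]
  rfl

theorem codes_thms_inter_codes_refut_eq_empty (hT : Consistent T) :
    g.codes (Thms T) ∩ g.codes (Refut T) = ∅ := by
  rw [← codes_inter, thms_inter_refut_eq_empty hT, codes, Set.image_empty]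

theorem weaklyBiseparate_of_extension (hext : Thms U ⊆ Thms T) (hT : Consistent T)
    (hW : g.codes (Thms T) ∩ W = ∅) :
    WeaklyBiseparate (g.codes (Thms T)) (W ∪ g.codes (Refut T))
      (g.codes (Thms U)) (g.codes (Refut U)) := by
  have thms_subset := g.codes_mono hext
  have refut_subset := g.codes_mono (refut_subset_refut hext)
  have thms_inter_refut := g.codes_thms_inter_codes_refut_eq_empty hT
  refine ⟨thms_subset, refut_subset.trans Set.subset_union_right, ?_, ?_⟩
  · exact Set.subset_eq_empty (Set.inter_subset_inter_right _ refut_subset) thms_inter_refut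
  · refine Set.subset_eq_empty (Set.inter_subset_inter_right _ thms_subset) ?_
    rw [Set.inter_comm, Set.inter_union_distrib_left, hW, thms_inter_refut, Set.union_empty]

theorem consistent_of_weaklyBiseparate
    (h : WeaklyBiseparate Z W (g.codes (Thms U)) (g.codes (Refut U))) : Consistent U := by
  intro hbot
  have hnot : Prv U ∼⊥ := prv_imp_of_prv_union_singleton (prv_of_mem (Or.inr rfl))
  exact h.2.2.1.subset ⟨h.1 (Set.mem_image_of_mem _ hbot), Set.mem_image_of_mem _ hnot⟩

theorem not_prv_literal_of_isSelector
    (h : WeaklyBiseparate Z W (g.codes (Thms U)) (g.codes (Refut U)))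
    {f : ℕ →. Bool} (hf : IsSelector f Z W) {b : Bool} (hb : b ∈ f n) :
    ¬ Prv U (literal (g.equiv.symm n) !b) := by
  obtain ⟨-, -, Z_inter_refut, W_inter_thms⟩ := h
  intro hprv
  cases b with
  | true => exact Z_inter_refut.subset ⟨hf.mem_left hb, g.mem_codes_iff.2 hprv⟩
  | false => exact W_inter_thms.subset ⟨hf.mem_right hb, g.mem_codes_iff.2 hprv⟩

/-- The theory `U` together with the literal on the sentence coded by `v` whose sign is given by
`f`. Both `v` and `f` are partial; if either diverges, nothing is added to `U`. -/
def decidingExtension (U : L.Theory) (f : ℕ →. Bool) (v : Part ℕ) : L.Theory :=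
  U ∪ {ψ | ∃ n ∈ v, ∃ b ∈ f n, ψ = literal (g.equiv.symm n) b}

theorem decidingExtension_eq_union_singleton {f : ℕ →. Bool} {v : Part ℕ} {b : Bool}
    (hn : n ∈ v) (hb : b ∈ f n) :
    g.decidingExtension U f v = U ∪ {literal (g.equiv.symm n) b} := by
  refine congrArg (U ∪ ·) (Set.ext fun ψ => ⟨?_, fun h => ⟨n, hn, b, hb, h⟩⟩)
  rintro ⟨n', hn', b', hb', rfl⟩
  obtain rfl := Part.mem_unique hn hn'
  obtain rfl := Part.mem_unique hb hb'
  rfl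

theorem decidingExtension_eq_self {f : ℕ →. Bool} {v : Part ℕ} (h : ∀ n ∈ v, ¬ (f n).Dom) :
    g.decidingExtension U f v = U :=
  Set.union_eq_self_of_subset_right fun _ ⟨n, hn, b, hb, _⟩ =>
    (h n hn (Part.dom_iff_mem.2 ⟨b, hb⟩)).elim

theorem computable_equiv_literal :
    Computable₂ fun (n : ℕ) (b : Bool) => g.equiv (literal (g.equiv.symm n) b) :=
  (Computable.cond Computable.snd Computable.fst (g.neg_comp.comp Computable.fst)).of_eq
    fun ⟨n, b⟩ => by cases b <;> simp [literal]

theorem exists_computable_thy_eq_decidingExtension {α : Type*} [Primcodable α] (hU : g.CEThy U)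
    {Φ : ℕ →. ℕ} (hΦ : Partrec Φ) {f : α × ℕ →. Bool} (hf : Partrec f) :
    ∃ s : α → ℕ, Computable s ∧
      ∀ a, g.thy (s a) = g.decidingExtension U (fun n => f (a, n)) (Φ (s a)) := by
  obtain ⟨u, rfl⟩ := g.exists_thy_eq hU
  have literal_re : REPred fun q : ℕ × α × ℕ =>
      ∃ n ∈ Φ q.1, ∃ b ∈ f (q.2.1, n), q.2.2 = g.equiv (literal (g.equiv.symm n) b) := by
    have sign_partrec : Partrec fun q : (ℕ × α × ℕ) × ℕ => f (q.1.2.1, q.2) :=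
      hf.comp ((Computable.fst.comp (Computable.snd.comp Computable.fst)).pair Computable.snd)
    have eq_re := rePred_eq (α := ((ℕ × α × ℕ) × ℕ) × Bool)
      (Computable.snd.comp (Computable.snd.comp (Computable.fst.comp Computable.fst)))
      (g.computable_equiv_literal.comp (Computable.snd.comp Computable.fst) Computable.snd)
    exact rePred_exists_mem (hΦ.comp Computable.fst) (rePred_exists_mem sign_partrec eq_re)
  obtain ⟨s, hs, hWs⟩ := exists_computable_wSet_eq_fixedPoint <|
    rePred_or
      (rePred_mem_wSet_comp (Computable.const u) (Computable.snd.comp Computable.snd)) literal_re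
  refine ⟨s, hs, fun a => ?_⟩
  ext ψ
  simp only [thy, decidingExtension, hWs, Set.mem_union, Equiv.image_symm_eq_preimage,
    Set.mem_preimage, Set.mem_ofPred_eq, EmbeddingLike.apply_eq_iff_eq]

end Numbering

section Implications

variable {g : Numbering L} {U : L.Theory} {X : Set L.Sentence}
  {F : Set L.Sentence → Set L.Sentence}

theorem EffXInseparable.effEssXCreative (h : EffXInseparable g U X) : EffEssXCreative g U X := by
  obtain ⟨Φ, hΦ, hΦ_insep⟩ := h
  obtain ⟨r, hr, hWr⟩ := g.exists_computable_wSet_eq_codes_refut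
  obtain ⟨s, hs, hWs⟩ := exists_computable_wSet_union
  refine ⟨fun i j => Φ (g.thmIdx i) (s j (r i)),
    hΦ.comp (g.thmIdx_comp.comp Computable.fst)
      (hs.comp Computable.snd (hr.comp Computable.fst)), fun i j hext hcon hdisj => ?_⟩
  have hsep := g.weaklyBiseparate_of_extension hext hcon hdisj
  rw [← g.wSet_thmIdx, ← hWr, ← hWs] at hsep
  obtain ⟨n, hn, hnX, hnotMem⟩ := hΦ_insep _ _ hsep
  rw [g.wSet_thmIdx, hWs] at hnotMem
  exact ⟨n, hn, hnX, fun hmem =>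
    hnotMem (Set.union_subset_union_right _ Set.subset_union_left hmem)⟩

theorem EffEssXCreative.effEssXIncomplete (h : EffEssXCreative g U X) :
    EffEssXIncomplete g U X := by
  obtain ⟨Φ, hΦ, hΦ_creative⟩ := h
  obtain ⟨r, hr, hWr⟩ := g.exists_computable_wSet_eq_codes_refut
  refine ⟨fun i => Φ i (r i), hΦ.comp Computable.id hr, fun i hext hcon => ?_⟩
  have hdisj : g.codes (Thms (g.thy i)) ∩ WSet (r i) = ∅ := by
    rw [hWr, g.codes_thms_inter_codes_refut_eq_empty hcon]
  obtain ⟨n, hn, ⟨φ, hφX, rfl⟩, hnotMem⟩ := hΦ_creative i (r i) hext hcon hdisj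
  rw [hWr] at hnotMem
  exact ⟨_, hn, φ, rfl, hφX, fun hprv => hnotMem (Or.inl ⟨φ, hprv, rfl⟩),
    fun hprv => hnotMem (Or.inr ⟨φ, hprv, rfl⟩)⟩

theorem EffEssXIncomplete.effIfEssIncomplete (h : EffEssXIncomplete g U X) :
    EffIfEssIncomplete g U fun _ => X := by
  obtain ⟨Φ, hΦ, hΦ_incomplete⟩ := h
  exact ⟨Φ, hΦ, fun i ⟨_, hΓ⟩ => hΦ_incomplete i (thms_mono (hΓ ▸ Set.subset_union_left))⟩

namespace IfEssWitness

variable {Φ : ℕ →. ℕ} {f : ℕ →. Bool} {Z W : Set ℕ} {k n : ℕ}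

theorem notMem_union (hΦ : IfEssWitness g U F Φ)
    (hsep : WeaklyBiseparate Z W (g.codes (Thms U)) (g.codes (Refut U))) (hf : IsSelector f Z W)
    (hk : g.thy k = g.decidingExtension U f (Φ k)) (hn : n ∈ Φ k) : n ∉ Z ∪ W := by
  intro hmem
  obtain ⟨b, hb⟩ := Part.dom_iff_mem.1 (hf.dom_iff.2 hmem)
  rw [g.decidingExtension_eq_union_singleton hn hb] at hk
  have hcon : Consistent (g.thy k) :=
    hk ▸ consistent_union_literal (g.not_prv_literal_of_isSelector hsep hf hb)
  obtain ⟨_, hn', φ, rfl, -, hind⟩ :=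
    hΦ k ⟨{literal (g.equiv.symm n) b}, by rw [hk, Finset.coe_singleton]⟩ hcon
  obtain rfl := Part.mem_unique hn' hn
  have hprv : Prv (g.thy k) (literal (g.equiv.symm (g.code φ)) b) :=
    prv_of_mem (hk ▸ Or.inr rfl)
  rw [Numbering.code, Equiv.symm_apply_apply] at hprv
  exact not_independent_of_prv_literal hprv hind

theorem exists_mem_codes_notMem_union (hΦ : IfEssWitness g U F Φ)
    (hsep : WeaklyBiseparate Z W (g.codes (Thms U)) (g.codes (Refut U))) (hf : IsSelector f Z W)
    (hk : g.thy k = g.decidingExtension U f (Φ k)) :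
    ∃ n ∈ Φ k, n ∈ g.codes (F U) ∧ n ∉ Z ∪ W := by
  have hnotMem : ∀ n ∈ Φ k, n ∉ Z ∪ W := fun _ => hΦ.notMem_union hsep hf hk
  have hkU : g.thy k = U :=
    hk.trans (g.decidingExtension_eq_self fun n hn hdom => hnotMem n hn (hf.dom_iff.1 hdom))
  obtain ⟨n, hn, φ, hφ, hφF, -⟩ :=
    hΦ k ⟨∅, by simp [hkU]⟩ (hkU ▸ g.consistent_of_weaklyBiseparate hsep)
  exact ⟨n, hn, ⟨φ, hkU ▸ hφF, hφ⟩, hnotMem n hn⟩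

end IfEssWitness

theorem EffIfEssIncomplete.effXInseparable (hU : g.CEThy U) (h : EffIfEssIncomplete g U F) :
    EffXInseparable g U (F U) := by
  obtain ⟨Φ, hΦ, hΦ_witness⟩ := h
  obtain ⟨f, hf, hf_selector⟩ := exists_partrec_isSelector_wSet
  obtain ⟨s, hs, hs_thy⟩ := g.exists_computable_thy_eq_decidingExtension hU hΦ hf
  exact ⟨fun i j => Φ (s (i, j)), hΦ.comp hs, fun i j hsep =>
    hΦ_witness.exists_mem_codes_notMem_union hsep (hf_selector i j) (hs_thy (i, j))⟩

end Implications

/-- For a consistent c.e. theory `U` and a set `X` of sentences,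
the following are equivalent: (a) `U` is effectively `X`-inseparable; (b) `U` is
effectively essentially `X`-creative; (c) `U` is effectively essentially
`X`-incomplete; (d) `U` is effectively if-essentially `X`-incomplete. -/
theorem statement9 {L : FirstOrder.Language} (g : Numbering L) (U : L.Theory)
    (hU : g.CEThy U) (hcon : Consistent U) (X : Set L.Sentence) :
    [EffXInseparable g U X,
     EffEssXCreative g U X,
     EffEssXIncomplete g U X,
     EffIfEssIncomplete g U (fun _ => X)].TFAE := by
  tfae_have 1 → 2 := EffXInseparable.effEssXCreative
  tfae_have 2 → 3 := EffEssXCreative.effEssXIncomplete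
  tfae_have 3 → 4 := EffEssXIncomplete.effIfEssIncomplete
  tfae_have 4 → 1 := EffIfEssIncomplete.effXInseparable hU
  tfae_finish

end PourEl
end

section
/- Let U be a consistent c.e. theory and 𝒳 a c.e. set of sentences. Then U is effectively essentially 𝒳-incomplete if and only if U is effectively essentially [𝒳]_U-incomplete, where [𝒳]_U is the closure of 𝒳 under U-provable equivalence. -/
open FirstOrder FirstOrder.Language

namespace PourEl

/-! ## Logical notions -/

variable {L : FirstOrder.Language}

/-- `[X]_U`: the closure of `X` under `U`-provable equivalence. -/
def ProvEquivClosure (U : L.Theory) (X : Set L.Sentence) : Set L.Sentence :=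
  {ψ | ∃ φ ∈ X, Prv U (φ ⇔ ψ)}

/-!
Only the passage from `[X]_U` to `X` needs an argument. Let `T = W_i` be a consistent extension of
`U` and let `ψ ∈ [X]_U` be the independent sentence found from `i`. Every `U`-provable equivalence
is `T`-provable, and the theorems of `T` are enumerated uniformly in `i`. Hence one can search for
some `φ ∈ X` with `T ⊢ φ ↔ ψ`; the search succeeds, and `φ` is independent of `T` because `ψ` is.
-/

section RecursivelyEnumerable

variable {α β : Type*} [Primcodable α] [Primcodable β]

theorem exists_computable₂_forall_iff_exists_of_rePred {p : α → Prop} (hp : REPred p) :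
    ∃ s : α → ℕ → Bool, Computable₂ s ∧ ∀ a, p a ↔ ∃ k, s a k := by
  obtain ⟨c, hc⟩ := Nat.Partrec.Code.exists_code.1 hp
  have hdom (a : α) : p a ↔ (c.eval (Encodable.encode a)).Dom := by
    simp [hc, Part.assert]
  refine ⟨fun a k => (c.evaln k (Encodable.encode a)).isSome, ?_, fun a => ?_⟩
  · exact Primrec.option_isSome.to_comp.comp <| Nat.Partrec.Code.primrec_evaln.to_comp.comp <|
      (Computable.snd.pair (Computable.const c)).pair (Computable.encode.comp Computable.fst)
  · simp only [hdom, Part.dom_iff_mem, Nat.Partrec.Code.evaln_complete, Option.isSome_iff_exists,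
      Option.mem_def]
    exact exists_comm

theorem exists_partrec_uniformization_of_rePred {R : α → β → Prop}
    (hR : REPred fun p : α × β => R p.1 p.2) :
    ∃ f : α →. β, Partrec f ∧ (∀ a, ∀ b ∈ f a, R a b) ∧ ∀ a, (∃ b, R a b) → (f a).Dom := by
  obtain ⟨s, hs, hRs⟩ := exists_computable₂_forall_iff_exists_of_rePred hR
  -- A number `t` codes a candidate `b` together with a stage at which `R a b` may be confirmed.
  let candidate (a : α) (t : ℕ) : Option β :=
    (Encodable.decode (α := β × ℕ) t).bind fun q => bif s (a, q.1) q.2 then some q.1 else none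
  have hcandidate : Computable₂ candidate := by
    refine Computable.bind_decode_iff.2 (Computable.cond ?_ ?_ (Computable.const none))
    · exact hs.comp (Computable.fst.pair (Computable.fst.comp Computable.snd))
        (Computable.snd.comp Computable.snd)
    · exact Computable.option_some.comp (Computable.fst.comp Computable.snd)
  refine ⟨fun a => Nat.rfindOpt (candidate a), Partrec.rfindOpt hcandidate, fun a b hb => ?_, ?_⟩
  · obtain ⟨t, ht⟩ := Nat.rfindOpt_spec hb
    obtain ⟨⟨b', k⟩, -, hk⟩ := Option.bind_eq_some_iff.1 ht
    have hstage : s (a, b') k ∧ b' = b := by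
      simpa [cond_eq_ite] using hk
    obtain ⟨hsk, rfl⟩ := hstage
    exact (hRs (a, b')).2 ⟨k, hsk⟩
  · rintro a ⟨b, hb⟩
    obtain ⟨k, hk⟩ := (hRs (a, b)).1 hb
    exact Nat.rfindOpt_dom.2 ⟨Encodable.encode (b, k), b, by simp [candidate, hk]⟩

theorem rePred_and {p q : α → Prop} (hp : REPred p) (hq : REPred q) :
    REPred fun a => p a ∧ q a :=
  (Partrec.bind hp (Partrec.comp hq Computable.fst).to₂).dom_re.of_eq fun a => by
    simp [Part.assert]

theorem rePred_mem_WSet {i n : α → ℕ} (hi : Computable i) (hn : Computable n) :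
    REPred fun a => n a ∈ WSet (i a) :=
  (Nat.Partrec.Code.eval_part.comp ((Computable.ofNat _).comp hi) hn).dom_re

end RecursivelyEnumerable

theorem prv_congr {T : L.Theory} {φ ψ : L.Sentence} (h : φ ⇔[T] ψ) : Prv T φ ↔ Prv T ψ :=
  forall_congr' fun _ => forall_congr' fun _ => forall_congr' fun _ => h.realize_bd_iff

theorem independent_congr {T : L.Theory} {φ ψ : L.Sentence} (h : φ ⇔[T] ψ) :
    Independent T φ ↔ Independent T ψ :=
  and_congr (not_congr (prv_congr h)) (not_congr (prv_congr h.not))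

theorem subset_provEquivClosure (T : L.Theory) (X : Set L.Sentence) :
    X ⊆ ProvEquivClosure T X :=
  fun φ hφ => ⟨φ, hφ, Theory.Iff.refl φ⟩

theorem provEquivClosure_mono {U T : L.Theory} (h : Thms U ⊆ Thms T) (X : Set L.Sentence) :
    ProvEquivClosure U X ⊆ ProvEquivClosure T X :=
  fun _ ⟨φ, hφ, hφψ⟩ => ⟨φ, hφ, h hφψ⟩

namespace Numbering

variable (g : Numbering L) {α : Type*} [Primcodable α]

theorem mem_WSet_thmIdx {i n : ℕ} :
    n ∈ WSet (g.thmIdx i) ↔ Prv (g.thy i) (g.equiv.symm n) := by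
  rw [g.thmIdx_spec, Equiv.image_eq_preimage_symm]
  rfl

theorem rePred_prv_iff {i m n : α → ℕ} (hi : Computable i) (hm : Computable m)
    (hn : Computable n) :
    REPred fun a => Prv (g.thy (i a)) (g.equiv.symm (m a) ⇔ g.equiv.symm (n a)) :=
  (rePred_mem_WSet (g.thmIdx_comp.comp hi) (g.iff_comp.comp hm hn)).of_eq fun a => by
    rw [mem_WSet_thmIdx, Equiv.symm_apply_apply]

theorem rePred_symm_mem {X : Set L.Sentence} (hX : CE (g.codes X)) {n : α → ℕ}
    (hn : Computable n) : REPred fun a => g.equiv.symm (n a) ∈ X := by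
  obtain ⟨x, hx⟩ := hX
  refine (rePred_mem_WSet (Computable.const x) hn).of_eq fun a => ?_
  rw [← hx, codes, Equiv.image_eq_preimage_symm, Set.mem_preimage]

theorem exists_partrec_equivalent_mem {X : Set L.Sentence} (hX : CE (g.codes X)) :
    ∃ f : ℕ × ℕ →. ℕ, Partrec f ∧ ∀ i, ∀ ψ ∈ ProvEquivClosure (g.thy i) X,
      ∃ φ ∈ X, g.code φ ∈ f (i, g.code ψ) ∧ φ ⇔[g.thy i] ψ := by
  let R (q : ℕ × ℕ) (m : ℕ) : Prop :=
    g.equiv.symm m ∈ X ∧ Prv (g.thy q.1) (g.equiv.symm m ⇔ g.equiv.symm q.2)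
  have hR : REPred fun p : (ℕ × ℕ) × ℕ => R p.1 p.2 :=
    rePred_and (g.rePred_symm_mem hX Computable.snd)
      (g.rePred_prv_iff (Computable.fst.comp Computable.fst) Computable.snd
        (Computable.snd.comp Computable.fst))
  obtain ⟨f, hf, hsound, hdom⟩ := exists_partrec_uniformization_of_rePred hR
  refine ⟨f, hf, fun i ψ ⟨φ, hφ, hφψ⟩ => ?_⟩
  have hRφ : R (i, g.code ψ) (g.code φ) := by simpa [R, code] using ⟨hφ, hφψ⟩
  obtain ⟨m, hm⟩ := Part.dom_iff_mem.1 (hdom _ ⟨_, hRφ⟩)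
  obtain ⟨hmX, hmψ⟩ := hsound _ m hm
  rw [code, Equiv.symm_apply_apply] at hmψ
  exact ⟨g.equiv.symm m, hmX, by simpa [code] using hm, hmψ⟩

end Numbering

namespace EffEssXIncomplete

variable {g : Numbering L} {U : L.Theory} {X Y : Set L.Sentence}

theorem mono (hXY : X ⊆ Y) : EffEssXIncomplete g U X → EffEssXIncomplete g U Y := by
  rintro ⟨Φ, hΦ, hfind⟩
  refine ⟨Φ, hΦ, fun i hUi hcon => ?_⟩
  obtain ⟨n, hn, φ, hcode, hφ, hind⟩ := hfind i hUi hcon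
  exact ⟨n, hn, φ, hcode, hXY hφ, hind⟩

theorem of_provEquivClosure (hX : CE (g.codes X)) :
    EffEssXIncomplete g U (ProvEquivClosure U X) → EffEssXIncomplete g U X := by
  rintro ⟨Φ, hΦ, hfind⟩
  obtain ⟨f, hf, hequiv⟩ := g.exists_partrec_equivalent_mem hX
  refine ⟨fun i => (Φ i).bind fun n => f (i, n), hΦ.bind hf, fun i hUi hcon => ?_⟩
  obtain ⟨_, hψΦ, ψ, rfl, hψ, hind⟩ := hfind i hUi hcon
  obtain ⟨φ, hφ, hφf, hφψ⟩ := hequiv i ψ (provEquivClosure_mono hUi X hψ)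
  exact ⟨g.code φ, Part.mem_bind hψΦ hφf, φ, rfl, hφ, (independent_congr hφψ).2 hind⟩

end EffEssXIncomplete

theorem statement10_general (g : Numbering L) (U : L.Theory) (X : Set L.Sentence)
    (hX : CE (g.codes X)) :
    EffEssXIncomplete g U X ↔ EffEssXIncomplete g U (ProvEquivClosure U X) :=
  ⟨.mono (subset_provEquivClosure U X), .of_provEquivClosure hX⟩

/-- For a consistent c.e. theory `U` and a c.e. set `X` of
sentences: `U` is effectively essentially `X`-incomplete iff `U` is effectively
essentially `[X]_U`-incomplete. -/
theorem statement10 {L : FirstOrder.Language} (g : Numbering L) (U : L.Theory)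
    (hU : g.CEThy U) (hcon : Consistent U)
    (X : Set L.Sentence) (hX : CE (g.codes X)) :
    EffEssXIncomplete g U X ↔ EffEssXIncomplete g U (ProvEquivClosure U X) :=
  statement10_general g U X hX

end PourEl
end
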